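/- Fix disjoint sets Y (agent atoms) and X (environment atoms), and let φ_org be an LTLf formula over atoms Y ∪ X. Let σ_org be an agent strategy winning for φ_org, let h = (Y_0,X_0)⋯(Y_n,X_n) be a σ_org-consistent history, and let σ_new be a strategy winning for φ_org assuming h. Define the strategy σ_org[h ← σ_new] : (2^X)^* → 2^Y by: on an environment sequence of the form env(h)·e, where env(h) = X_0⋯X_n is the sequence of environment moves of h, its value is σ_new(e); on every other environment sequence its value equals that of σ_org. Then σ_org[h ← σ_new] is winning for φ_org. -/

import Mathlib

inductive LTLf (P : Type) : Type where
  | tt : LTLf P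
  | ff : LTLf P
  | atom : P → LTLf P
  | natom : P → LTLf P
  | conj : LTLf P → LTLf P → LTLf P
  | disj : LTLf P → LTLf P → LTLf P
  | next : LTLf P → LTLf P
  | wnext : LTLf P → LTLf P
  | untl : LTLf P → LTLf P → LTLf P
  | release : LTLf P → LTLf P → LTLf P
  deriving DecidableEq

def LTLf.Sat {P : Type} : List (Set P) → LTLf P → Prop
  | _, .tt => True
  | _, .ff => False
  | [], .atom _ => False
  | w :: _, .atom p => p ∈ w
  | [], .natom _ => False
  | w :: _, .natom p => p ∉ w
  | τ, .conj φ₁ φ₂ => LTLf.Sat τ φ₁ ∧ LTLf.Sat τ φ₂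
  | τ, .disj φ₁ φ₂ => LTLf.Sat τ φ₁ ∨ LTLf.Sat τ φ₂
  | [], .next _ => False
  | _ :: τ, .next φ => τ ≠ [] ∧ LTLf.Sat τ φ
  | [], .wnext _ => True
  | _ :: τ, .wnext φ => τ = [] ∨ LTLf.Sat τ φ
  | [], .untl _ _ => False
  | w :: τ, .untl φ₁ φ₂ =>
      LTLf.Sat (w :: τ) φ₂ ∨ (LTLf.Sat (w :: τ) φ₁ ∧ LTLf.Sat τ (.untl φ₁ φ₂))
  | [], .release _ _ => True
  | w :: τ, .release φ₁ φ₂ =>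
      LTLf.Sat (w :: τ) φ₂ ∧ (LTLf.Sat (w :: τ) φ₁ ∨ LTLf.Sat τ (.release φ₁ φ₂))
termination_by τ φ => (τ.length, sizeOf φ)

open Classical in
noncomputable def LTLf.prog {P : Type} : LTLf P → Set P → LTLf P
  | .tt, _ => .tt
  | .ff, _ => .ff
  | .atom p, w => if p ∈ w then .tt else .ff
  | .natom p, w => if p ∈ w then .ff else .tt
  | .conj φ₁ φ₂, w => .conj (φ₁.prog w) (φ₂.prog w)
  | .disj φ₁ φ₂, w => .disj (φ₁.prog w) (φ₂.prog w)
  | .next φ, _ => .conj φ (.untl .tt .tt)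
  | .wnext φ, _ => .disj φ (.release .ff .ff)
  | .untl φ₁ φ₂, w =>
      .disj (φ₂.prog w) (.conj (φ₁.prog w) (.conj (.untl φ₁ φ₂) (.untl .tt .tt)))
  | .release φ₁ φ₂, w =>
      .conj (φ₂.prog w) (.disj (φ₁.prog w) (.disj (.release φ₁ φ₂) (.release .ff .ff)))

noncomputable def LTLf.progTrace {P : Type} (φ : LTLf P) (h : List (Set P)) : LTLf P :=
  h.foldl LTLf.prog φ

/-- The joint interpretation over atoms `Y ⊕ X` determined by an agent move `m.1 ⊆ Y`
and an environment move `m.2 ⊆ X`. -/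
def joint {Y X : Type} (m : Set Y × Set X) : Set (Y ⊕ X) :=
  {a | Sum.elim (· ∈ m.1) (· ∈ m.2) a}

/-- The finite trace (over `2^(Y∪X)`) formed by the first `k` joint moves of a play. -/
def jointTrace {Y X : Type} (π : ℕ → Set Y × Set X) (k : ℕ) : List (Set (Y ⊕ X)) :=
  (List.range k).map fun i => joint (π i)

/-- The finite trace corresponding to a history (finite sequence of joint moves). -/
def histTrace {Y X : Type} (h : List (Set Y × Set X)) : List (Set (Y ⊕ X)) :=
  h.map joint

/-- A play is σ-consistent if at every instant the agent move is the one prescribed by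
the strategy σ on the preceding environment moves (in particular `Y_0 = σ(ε)`). -/
def PlayConsistent {Y X : Type} (σ : List (Set X) → Set Y) (π : ℕ → Set Y × Set X) : Prop :=
  ∀ i : ℕ, (π i).1 = σ ((List.range i).map fun j => (π j).2)

/-- A history is σ-consistent if every agent move in it is prescribed by σ on the
preceding environment moves. -/
def HistConsistent {Y X : Type} (σ : List (Set X) → Set Y) (h : List (Set Y × Set X)) : Prop :=
  ∀ (i : ℕ) (hi : i < h.length), (h.get ⟨i, hi⟩).1 = σ ((h.take i).map Prod.snd)
/-- A strategy σ is winning for the LTLf formula φ over atoms Y ∪ X if every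
σ-consistent play has a finite, possibly empty, prefix satisfying φ. -/
def WinningFor {Y X : Type} (σ : List (Set X) → Set Y) (φ : LTLf (Y ⊕ X)) : Prop :=
  ∀ π : ℕ → Set Y × Set X, PlayConsistent σ π → ∃ k : ℕ, LTLf.Sat (jointTrace π k) φ

/-- A strategy σ is winning for φ assuming the history h if for every σ-consistent play τ
the concatenation h·τ has a finite, possibly empty, prefix (extending h) satisfying φ. -/
def WinningAssuming {Y X : Type} (σ : List (Set X) → Set Y) (φ : LTLf (Y ⊕ X))
    (h : List (Set Y × Set X)) : Prop :=
  ∀ π : ℕ → Set Y × Set X, PlayConsistent σ π →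
    ∃ k : ℕ, LTLf.Sat (histTrace h ++ jointTrace π k) φ

/-- A strategy σ solves incremental synthesis for (φ_org, h, φ_new) if every σ-consistent
play has a finite, possibly empty, prefix ρ such that h·ρ satisfies φ_org and ρ
satisfies φ_new. -/
def SolvesIncremental {Y X : Type} (σ : List (Set X) → Set Y) (φorg : LTLf (Y ⊕ X))
    (h : List (Set Y × Set X)) (φnew : LTLf (Y ⊕ X)) : Prop :=
  ∀ π : ℕ → Set Y × Set X, PlayConsistent σ π →
    ∃ k : ℕ, LTLf.Sat (histTrace h ++ jointTrace π k) φorg ∧ LTLf.Sat (jointTrace π k) φnew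

/-!
A play consistent with `σ_org[h ← σ_new]` whose environment moves never extend `env(h)` is
consistent with `σ_org`. Otherwise the play begins with `h`: the combined strategy agrees with
`σ_org` on sequences shorter than `env(h)`, so `h` is consistent with it, and a strategy and the
environment moves together determine a history. After `h` the play is consistent with `σ_new`.
-/

theorem map_range_add {α : Type*} (f : ℕ → α) (m k : ℕ) :
    (List.range (m + k)).map f =
      (List.range m).map f ++ (List.range k).map fun i => f (m + i) := by
  rw [List.range_add, List.map_append, List.map_map, Function.comp_def]

theorem eq_map_range_of_prefix {α : Type*} {f : ℕ → α} {l : List α} {n : ℕ}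
    (hl : l <+: (List.range n).map f) : l = (List.range l.length).map f := by
  have hle : l.length ≤ n := by simpa using hl.length_le
  calc
    l = ((List.range n).map f).take l.length := List.prefix_iff_eq_take.mp hl
    _ = (List.range l.length).map f := by rw [← List.map_take, List.take_range, min_eq_left hle]

section Consistency

variable {Y X : Type} {σ σ' : List (Set X) → Set Y} {h h' : List (Set Y × Set X)}
  {π : ℕ → Set Y × Set X}

theorem histTrace_map_range (π : ℕ → Set Y × Set X) (n : ℕ) :
    histTrace ((List.range n).map π) = jointTrace π n :=
  List.map_map

theorem jointTrace_add (π : ℕ → Set Y × Set X) (m k : ℕ) :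
    jointTrace π (m + k) = jointTrace π m ++ jointTrace (fun i => π (m + i)) k :=
  map_range_add _ m k

theorem HistConsistent.congr (hh : HistConsistent σ h)
    (hσ : ∀ e : List (Set X), e.length < h.length → σ' e = σ e) : HistConsistent σ' h := by
  intro i hi
  rw [hh i hi, hσ _ (by simpa using hi)]

theorem HistConsistent.eq_of_map_snd_eq (hh : HistConsistent σ h) (hh' : HistConsistent σ h')
    (henv : h.map Prod.snd = h'.map Prod.snd) : h = h' := by
  have hlen : h.length = h'.length := by simpa using congrArg List.length henv
  refine List.ext_getElem hlen fun i hi hi' => Prod.ext ?_ ?_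
  · calc
      h[i].1 = σ ((h.take i).map Prod.snd) := hh i hi
      _ = σ ((h'.take i).map Prod.snd) := by rw [List.map_take, henv, List.map_take]
      _ = h'[i].1 := (hh' i hi').symm
  · simpa [hi, hi'] using congrArg (·[i]?) henv

theorem PlayConsistent.histConsistent_map_range (hπ : PlayConsistent σ π) (n : ℕ) :
    HistConsistent σ ((List.range n).map π) := by
  intro i hi
  have hin : i < n := by simpa using hi
  simpa [← List.map_take, List.take_range, min_eq_left hin.le, Function.comp_def] using hπ i

theorem PlayConsistent.shift (hπ : PlayConsistent σ π) {m : ℕ}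
    (hσ : ∀ e : List (Set X), σ (((List.range m).map fun j => (π j).2) ++ e) = σ' e) :
    PlayConsistent σ' fun i => π (m + i) := by
  intro i
  rw [hπ (m + i), map_range_add, hσ]

theorem PlayConsistent.combined_cases {σorg σnew σc : List (Set X) → Set Y}
    (hπ : PlayConsistent σc π) (hhist : HistConsistent σorg h)
    (hc₁ : ∀ e : List (Set X), (h.map Prod.snd) <+: e → σc e = σnew (e.drop h.length))
    (hc₂ : ∀ e : List (Set X), ¬ (h.map Prod.snd) <+: e → σc e = σorg e) :
    PlayConsistent σorg π ∨
      h = (List.range h.length).map π ∧ PlayConsistent σnew fun i => π (h.length + i) := by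
  by_cases hpre : ∃ n, h.map Prod.snd <+: (List.range n).map fun j => (π j).2
  · obtain ⟨n, hn⟩ := hpre
    have henv : h.map Prod.snd = (List.range h.length).map fun j => (π j).2 := by
      simpa using eq_map_range_of_prefix hn
    have hhist_c : HistConsistent σc h :=
      hhist.congr fun e he => hc₂ e fun hle => he.not_ge (by simpa using hle.length_le)
    refine Or.inr ⟨?_, hπ.shift fun e => ?_⟩
    · exact hhist_c.eq_of_map_snd_eq (hπ.histConsistent_map_range h.length)
        (henv.trans List.map_map.symm)
    · rw [← henv, hc₁ _ (List.prefix_append _ _), List.drop_left' (List.length_map _)]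
  · exact Or.inl fun i => (hπ i).trans (hc₂ _ fun hi => hpre ⟨i, hi⟩)

end Consistency

theorem combined_strategy_winning_general {Y X : Type} (L : Set (List (Set (Y ⊕ X))))
    (σorg σnew σc : List (Set X) → Set Y) (h : List (Set Y × Set X))
    (hwin : ∀ π, PlayConsistent σorg π → ∃ k, jointTrace π k ∈ L)
    (hhist : HistConsistent σorg h)
    (hnew : ∀ π, PlayConsistent σnew π → ∃ k, histTrace h ++ jointTrace π k ∈ L)
    (hc₁ : ∀ e : List (Set X), (h.map Prod.snd) <+: e → σc e = σnew (e.drop h.length))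
    (hc₂ : ∀ e : List (Set X), ¬ (h.map Prod.snd) <+: e → σc e = σorg e)
    (π : ℕ → Set Y × Set X) (hπ : PlayConsistent σc π) : ∃ k, jointTrace π k ∈ L := by
  rcases hπ.combined_cases hhist hc₁ hc₂ with horg | ⟨hprefix, htail⟩
  · exact hwin π horg
  · have htrace : histTrace h = jointTrace π h.length :=
      (congrArg histTrace hprefix).trans (histTrace_map_range π h.length)
    obtain ⟨k, hk⟩ := hnew _ htail
    exact ⟨h.length + k, by rwa [jointTrace_add, ← htrace]⟩

/-- If σ_org is winning for φ_org, h is a σ_org-consistent history, and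
σ_new is winning for φ_org assuming h, then the strategy σ_org[h ← σ_new] — which on
environment sequences of the form env(h)·e returns σ_new(e) and on every other
environment sequence agrees with σ_org — is winning for φ_org. -/
theorem combined_strategy_winning {Y X : Type} (φorg : LTLf (Y ⊕ X))
    (σorg σnew σc : List (Set X) → Set Y) (h : List (Set Y × Set X))
    (hwin : WinningFor σorg φorg)
    (hhist : HistConsistent σorg h)
    (hnew : WinningAssuming σnew φorg h)
    (hc₁ : ∀ e : List (Set X), (h.map Prod.snd) <+: e → σc e = σnew (e.drop h.length))
    (hc₂ : ∀ e : List (Set X), ¬ (h.map Prod.snd) <+: e → σc e = σorg e) :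
    WinningFor σc φorg :=
  combined_strategy_winning_general {τ | LTLf.Sat τ φorg} σorg σnew σc h hwin hhist hnew hc₁ hc₂
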